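/- Let n ≥ 2 be an even integer with n ≠ 8. Then the greatest common divisor of the set {n+1} ∪ {C(n+1, i) : i ∈ ℕ, 4 ≤ i, 2i ≤ n+1} equals η(n), where η(n) = p if n + 1 = p^k for some prime p and integer k ≥ 1, and η(n) = 1 otherwise. -/

import Mathlib

open scoped Classical

/-- `eta n = p` if `n + 1 = p ^ k` for some prime `p` and `k ≥ 1`, and `eta n = 1`
otherwise. -/
noncomputable def eta (n : ℕ) : ℕ :=
  if h : ∃ p : ℕ, ∃ k : ℕ, p.Prime ∧ 1 ≤ k ∧ n + 1 = p ^ k then h.choose else 1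

/-!
If `N = p ^ k`, then `p` divides every `N.choose i` with `0 < i < N`, but `p ^ 2` does not divide
`N.choose (p ^ (k - 1))`. If a prime `p` divides `N = p ^ a * c` with `p ∤ c` and `c ≠ 1`, then `p`
does not divide `N.choose (p ^ a)` by Lucas' theorem. This index is at least `4` unless
`p ∈ {2, 3}`, and for these primes a usable index `p * j` with `j ≥ 2` can be read off the base-`p`
digits of `N / p`, unless `N / p` is `p ^ b` or `p ^ b + 1`. When `N = p * (p ^ b + 1)` there is
none: `N.choose i` is prime to `p` only for `i` among `0`, `p`, `p ^ (b + 1)` and `N`, and none of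
these satisfies `4 ≤ i` and `2 * i ≤ N` when `p ≤ 3`.
-/

section Lucas

variable {p : ℕ}

lemma prime_dvd_choose_iff_mod_or_div (hp : p.Prime) (n k : ℕ) :
    p ∣ n.choose k ↔ p ∣ (n % p).choose (k % p) ∨ p ∣ (n / p).choose (k / p) := by
  have : Fact p.Prime := ⟨hp⟩
  rw [Choose.choose_modEq_choose_mod_mul_choose_div_nat.dvd_iff dvd_rfl, hp.dvd_mul]

lemma prime_dvd_choose_mul_iff (hp : p.Prime) (n k : ℕ) :
    p ∣ n.choose (p * k) ↔ p ∣ (n / p).choose k := by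
  simp [prime_dvd_choose_iff_mod_or_div hp n, Nat.mul_div_cancel_left k hp.pos, hp.ne_one]

lemma prime_dvd_choose_pow_iff (hp : p.Prime) (n a : ℕ) :
    p ∣ n.choose (p ^ a) ↔ p ∣ n / p ^ a := by
  induction a generalizing n with
  | zero => simp
  | succ a ih => rw [pow_succ', prime_dvd_choose_mul_iff hp, ih, Nat.div_div_eq_div_mul]

lemma prime_not_dvd_choose_of_lt (hp : p.Prime) {n k : ℕ} (hkn : k ≤ n) (hn : n < p) :
    ¬ p ∣ n.choose k := by
  rw [hp.dvd_iff_one_le_factorization (Nat.choose_pos hkn).ne',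
    Nat.factorization_choose_eq_zero_of_lt hn]
  exact Nat.not_succ_le_zero 0

end Lucas

section NotDvd

variable {p : ℕ}

lemma exists_eq_pow_mul_and_two_le (hp : p.Prime) {N : ℕ} (hN : N ≠ 0) (hpN : p ∣ N)
    (hpow : ∀ k, 1 ≤ k → N ≠ p ^ k) :
    ∃ a c, 1 ≤ a ∧ 2 ≤ c ∧ ¬ p ∣ c ∧ N = p ^ a * c := by
  obtain ⟨a, c, hc, rfl⟩ := Nat.exists_eq_pow_mul_and_not_dvd hN p hp.ne_one
  have ha : a ≠ 0 := by
    rintro rfl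
    exact hc (by simpa using hpN)
  have hc0 : c ≠ 0 := right_ne_zero_of_mul hN
  have hc1 : c ≠ 1 := by
    rintro rfl
    exact hpow a (by omega) (mul_one _)
  exact ⟨a, c, by omega, by omega, hc, rfl⟩

lemma exists_two_le_not_dvd_choose (hp : p.Prime) {m : ℕ} (hm : 4 ≤ m)
    (hpow : ∀ b, m ≠ p ^ b) (hsucc : ∀ b, m ≠ p ^ b + 1) :
    ∃ j, 2 ≤ j ∧ 2 * j ≤ m ∧ ¬ p ∣ m.choose j := by
  have hlt : m % p < p := Nat.mod_lt m hp.pos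
  obtain hr | hr := le_or_gt 2 (m % p)
  · refine ⟨2, le_rfl, hm, ?_⟩
    have h2p : 2 < p := hr.trans_lt hlt
    rw [prime_dvd_choose_iff_mod_or_div hp, Nat.mod_eq_of_lt h2p, Nat.div_eq_of_lt h2p,
      Nat.choose_zero_right, Nat.dvd_one, or_iff_left hp.ne_one]
    exact prime_not_dvd_choose_of_lt hp hr hlt
  · obtain ⟨a, c, ha, hc2, hpc, hac⟩ := exists_eq_pow_mul_and_two_le hp (N := m - m % p)
      (by omega) (Nat.dvd_sub_mod m) fun k _ hk => by
        obtain h0 | h1 : m % p = 0 ∨ m % p = 1 := by omega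
        · exact hpow k (by omega)
        · exact hsucc k (by omega)
    have hle : p ≤ p ^ a := Nat.le_self_pow (by omega) p
    have hdiv : m / p ^ a = c := by
      rw [show m = m % p + p ^ a * c by omega, Nat.add_mul_div_left _ _ (by omega),
        Nat.div_eq_of_lt (hlt.trans_le hle), zero_add]
    refine ⟨p ^ a, hp.two_le.trans hle, ?_, ?_⟩
    · have : p ^ a * 2 ≤ p ^ a * c := Nat.mul_le_mul_left _ hc2
      omega
    · rwa [prime_dvd_choose_pow_iff hp, hdiv]

lemma exists_four_le_not_dvd_choose (hp : p.Prime) {N : ℕ} (hN : N ≠ 0) (hpN : p ∣ N)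
    (hpow : ∀ k, 1 ≤ k → N ≠ p ^ k) (hexc : p ≤ 3 → ∀ b, N ≠ p * (p ^ b + 1)) :
    ∃ i, 4 ≤ i ∧ 2 * i ≤ N ∧ ¬ p ∣ N.choose i := by
  obtain hp4 | hp3 := le_or_gt 4 p
  · obtain ⟨a, c, ha, hc2, hpc, rfl⟩ := exists_eq_pow_mul_and_two_le hp hN hpN hpow
    refine ⟨p ^ a, hp4.trans (Nat.le_self_pow (by omega) p), ?_, ?_⟩
    · rw [mul_comm 2]
      exact Nat.mul_le_mul_left _ hc2
    · rwa [prime_dvd_choose_pow_iff hp, Nat.mul_div_cancel_left _ (pow_pos hp.pos a)]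
  · obtain ⟨m, rfl⟩ := hpN
    have hm_pow (b : ℕ) : m ≠ p ^ b := by
      rintro rfl
      exact hpow (b + 1) (by omega) (pow_succ' p b).symm
    have hm_succ (b : ℕ) : m ≠ p ^ b + 1 := by
      rintro rfl
      exact hexc (by omega) b rfl
    have hm4 : 4 ≤ m := by
      have h0 : m ≠ 0 := right_ne_zero_of_mul hN
      have h1 : m ≠ 1 := by simpa using hm_pow 0
      have h2 : m ≠ 2 := by simpa using hm_succ 0
      have h3 : m ≠ p := by simpa using hm_pow 1
      have h4 : m ≠ p + 1 := by simpa using hm_succ 1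
      have := hp.two_le
      omega
    obtain ⟨j, hj2, hjm, hj⟩ := exists_two_le_not_dvd_choose hp hm4 hm_pow hm_succ
    refine ⟨p * j, Nat.mul_le_mul hp.two_le hj2, ?_, ?_⟩
    · rw [mul_left_comm]
      exact Nat.mul_le_mul_left p hjm
    · rwa [prime_dvd_choose_mul_iff hp, Nat.mul_div_cancel_left _ hp.pos]

lemma prime_sq_not_dvd_choose_pow_succ_pow (hp : p.Prime) (b : ℕ) :
    ¬ p ^ 2 ∣ (p ^ (b + 1)).choose (p ^ b) := by
  have hle : p ^ b ≤ p ^ (b + 1) := Nat.pow_le_pow_right hp.pos b.le_succ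
  rw [hp.pow_dvd_iff_le_factorization (Nat.choose_pos hle).ne',
    Nat.factorization_choose_prime_pow hp hle (pow_ne_zero b hp.ne_zero), hp.factorization_pow,
    Finsupp.single_eq_same]
  omega

lemma exists_four_le_sq_not_dvd_choose_prime_pow (hp : p.Prime) {k : ℕ} (hk : 2 ≤ k)
    (h4 : p ^ k ≠ 4) (h9 : p ^ k ≠ 9) :
    ∃ i, 4 ≤ i ∧ 2 * i ≤ p ^ k ∧ ¬ p ^ 2 ∣ (p ^ k).choose i := by
  obtain ⟨b, rfl⟩ : ∃ b, k = b + 1 := ⟨k - 1, by omega⟩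
  refine ⟨p ^ b, ?_, ?_, prime_sq_not_dvd_choose_pow_succ_pow hp b⟩
  · obtain rfl | hb := eq_or_ne b 1
    · have hp2 : p ≠ 2 := by rintro rfl; exact h4 rfl
      have hp3 : p ≠ 3 := by rintro rfl; exact h9 rfl
      have := hp.two_le
      rw [pow_one]
      omega
    · calc 4 = 2 ^ 2 := rfl
        _ ≤ p ^ 2 := Nat.pow_le_pow_left hp.two_le 2
        _ ≤ p ^ b := Nat.pow_le_pow_right hp.pos (by omega)
  · rw [pow_succ']
    exact Nat.mul_le_mul_right _ hp.two_le

end NotDvd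

lemma eta_eq_of_eq_prime_pow {n p k : ℕ} (hp : p.Prime) (hk : 1 ≤ k) (hn : n + 1 = p ^ k) :
    eta n = p := by
  have h : ∃ q l : ℕ, q.Prime ∧ 1 ≤ l ∧ n + 1 = q ^ l := ⟨p, k, hp, hk, hn⟩
  obtain ⟨l, hq, hl, hql⟩ := h.choose_spec
  rw [eta, dif_pos h, ← Nat.prime_dvd_prime_iff_eq hq hp]
  have hdvd : h.choose ∣ p ^ k := (dvd_pow_self _ (by omega)).trans (hql.symm.trans hn).dvd
  exact hq.dvd_of_dvd_pow hdvd

lemma dvd_gcd_choose_iff (d n s : ℕ) :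
    d ∣ Nat.gcd (n + 1)
        (Finset.gcd ((Finset.range (n + 2)).filter (fun i => s ≤ i ∧ 2 * i ≤ n + 1))
          (fun i => Nat.choose (n + 1) i)) ↔
      d ∣ n + 1 ∧ ∀ i, s ≤ i → 2 * i ≤ n + 1 → d ∣ (n + 1).choose i := by
  rw [Nat.dvd_gcd_iff, Finset.dvd_gcd_iff]
  refine and_congr_right fun _ => forall_congr' fun i => ?_
  rw [Finset.mem_filter, Finset.mem_range, and_imp, and_imp]
  exact ⟨fun h hs hi => h (by omega) hs hi, fun h _ => h⟩

lemma eq_prime_of_dvd_pow_of_not_sq_dvd {p d k : ℕ} (hp : p.Prime) (hd : d ∣ p ^ k)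
    (hpd : p ∣ d) (hsq : ¬ p ^ 2 ∣ d) : d = p := by
  obtain ⟨j, -, rfl⟩ := (Nat.dvd_prime_pow hp).1 hd
  have hj0 : j ≠ 0 := by
    rintro rfl
    exact hp.ne_one (Nat.dvd_one.1 hpd)
  have hj2 : ¬ 2 ≤ j := fun h => hsq (pow_dvd_pow p h)
  rw [show j = 1 by omega, pow_one]

theorem gcd_choose_eq_eta_general (n : ℕ) (h₂ : ∀ b, n + 1 ≠ 2 * (2 ^ b + 1))
    (h₃ : ∀ b, n + 1 ≠ 3 * (3 ^ b + 1)) (hne : n ≠ 8) :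
    Nat.gcd (n + 1)
      (Finset.gcd ((Finset.range (n + 2)).filter (fun i => 4 ≤ i ∧ 2 * i ≤ n + 1))
        (fun i => Nat.choose (n + 1) i)) = eta n := by
  by_cases h : ∃ p k : ℕ, p.Prime ∧ 1 ≤ k ∧ n + 1 = p ^ k
  · obtain ⟨p, k, hp, hk, hpk⟩ := h
    rw [eta_eq_of_eq_prime_pow hp hk hpk]
    refine eq_prime_of_dvd_pow_of_not_sq_dvd hp ((Nat.gcd_dvd_left _ _).trans hpk.dvd) ?_ ?_
    · rw [dvd_gcd_choose_iff, hpk]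
      exact ⟨dvd_pow_self p (by omega), fun i _ _ => hp.dvd_choose_pow (by omega) (by omega)⟩
    · rw [dvd_gcd_choose_iff, hpk]
      rintro ⟨hsq, hall⟩
      have hk2 : 2 ≤ k := (Nat.pow_dvd_pow_iff_le_right hp.one_lt).1 hsq
      obtain ⟨i, hi4, hi, hndvd⟩ := exists_four_le_sq_not_dvd_choose_prime_pow hp hk2
        (hpk ▸ h₂ 0) (by omega)
      exact hndvd (hall i hi4 hi)
  · rw [eta, dif_neg h, Nat.eq_one_iff_not_exists_prime_dvd]
    intro p hp hdvd
    obtain ⟨hpn, hall⟩ := (dvd_gcd_choose_iff p n 4).1 hdvd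
    have hexc (hp3 : p ≤ 3) : ∀ b, n + 1 ≠ p * (p ^ b + 1) := by
      obtain rfl | rfl : p = 2 ∨ p = 3 := by have := hp.two_le; omega
      exacts [h₂, h₃]
    obtain ⟨i, hi4, hi, hndvd⟩ := exists_four_le_not_dvd_choose hp n.succ_ne_zero hpn
      (fun k hk hpk => h ⟨p, k, hp, hk, hpk⟩) hexc
    exact hndvd (hall i hi4 hi)

lemma even_mul_pow_add_one (p b : ℕ) : Even (p * (p ^ b + 1)) := by
  rw [Nat.even_mul, Nat.even_add_one, Nat.even_pow]
  tauto

/-- For even `n ≥ 2` with `n ≠ 8`, the gcd of `{n+1} ∪ {C(n+1, i) : 4 ≤ i, 2i ≤ n+1}`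
equals `eta n`. -/
theorem gcd_choose_eq_eta (n : ℕ) (hn : 2 ≤ n) (hev : Even n) (hne : n ≠ 8) :
    Nat.gcd (n + 1)
      (Finset.gcd ((Finset.range (n + 2)).filter (fun i => 4 ≤ i ∧ 2 * i ≤ n + 1))
        (fun i => Nat.choose (n + 1) i)) = eta n := by
  have hodd : ¬ Even (n + 1) := Nat.not_even_iff_odd.2 hev.add_one
  exact gcd_choose_eq_eta_general n (fun b h => hodd (h ▸ even_mul_pow_add_one 2 b))
    (fun b h => hodd (h ▸ even_mul_pow_add_one 3 b)) hne
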